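/- arXiv:2511.19309 — 2 statements merged into one kernel-verified Lean document; each statement's English description precedes it below -/
import Mathlib

section
/- Let K : 𝕋^{d−1} × ℝ → [0,+∞) be measurable with constants p > 2, s ∈ (0,1), γ > 0 such that K(ξ) ≤ γ |ξ_d|^{−p} for |ξ_d| ≥ 1 and K(ξ) ≤ γ ‖ξ‖_♯^{−(d+s)} for |ξ_d| < 1; assume moreover that K(x′,x_d) = K(−x′,x_d) = K(x′,−x_d) for all (x′,x_d), and that there exists γ₀ > 0 with K(ξ) ≥ γ₀ whenever |ξ_d| ≤ 1. Then 𝒫_K satisfies assumption (H): for every L > 0 and δ > 0 there exist ε₀ ∈ (0,1) and C(δ,L) > 0 such that for every E ∈ 𝔠_L with osc_{𝕋^{d−1}} f_E ≥ δ one has 𝒫_K(E) − 𝒫_K(E_ε) ≥ C(δ,L) ε for all 0 < ε ≤ ε₀. -/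
open MeasureTheory Filter Set
open scoped ENNReal

noncomputable section

/-- The flat torus `𝕋^{d-1}`. -/
abbrev Torus (d : ℕ) : Type := Fin (d-1) → AddCircle (1:ℝ)

/-- The periodic strip `𝕋^{d-1} × ℝ`. -/
abbrev Cyl (d : ℕ) : Type := Torus d × ℝ

/-- The subgraph of a function `g : 𝕋^{d-1} → ℝ`. -/
def subgraph (d : ℕ) (g : Torus d → ℝ) : Set (Cyl d) := {x | x.2 ≤ g x.1}

/-- The class `𝔠_L` of periodic `L`-Lipschitz subgraphs. -/
def LipClass (d : ℕ) (L : ℝ) : Set (Set (Cyl d)) :=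
  {E | ∃ g : Torus d → ℝ, LipschitzWith (Real.toNNReal L) g ∧ E = subgraph d g}

/-- The slab `𝕊^d_R = 𝕋^{d-1} × (-R, R)`. -/
def SlabR (d : ℕ) (R : ℝ) : Set (Cyl d) := {x | -R < x.2 ∧ x.2 < R}

/-- The class `𝔐_R` of measurable sets squeezed between two halfspaces. -/
def MR (d : ℕ) (R : ℝ) : Set (Set (Cyl d)) :=
  {E | MeasurableSet E ∧ {x : Cyl d | x.2 < -R} ⊆ E ∧ E ⊆ {x : Cyl d | x.2 < R}}

/-- The periodic halfspace `H_λ = 𝕋^{d-1} × (-∞, λ)`. -/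
def halfspace (d : ℕ) (lam : ℝ) : Set (Cyl d) := {x | x.2 < lam}

/-- Translation of `𝕋^{d-1} × ℝ` by a vector `τ ∈ ℝ^d = ℝ^{d-1} × ℝ`,
acting through the quotient. -/
def translCyl (d : ℕ) (τ : (Fin (d-1) → ℝ) × ℝ) (x : Cyl d) : Cyl d :=
  (fun i => x.1 i + (τ.1 i : AddCircle (1:ℝ)), x.2 + τ.2)

/-- The periodic norm `‖ξ‖_♯ = (|ξ_d|² + min_{z'∈ℤ^{d-1}} |ξ̃' + z'|²)^{1/2}`. -/
def pnorm (d : ℕ) (ξ : Cyl d) : ℝ := Real.sqrt (ξ.2 ^ 2 + ∑ i, ‖ξ.1 i‖ ^ 2)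

/-- The nonlocal perimeter governed by a kernel `K`:
`𝒫_K(E) = ∫_E ∫_{Eᶜ} K(x - y) dy dx`. -/
def PK (d : ℕ) (K : Cyl d → ℝ) (E : Set (Cyl d)) : ℝ≥0∞ :=
  ∫⁻ x in E, ∫⁻ y in Eᶜ, ENNReal.ofReal (K (x - y)) ∂volume ∂volume

/-- Oscillation of a function on the torus. -/
def osc (d : ℕ) (g : Torus d → ℝ) : ℝ := (⨆ x, g x) - (⨅ x, g x)


lemma aux_S (h t : ℝ) : ENNReal.ofReal (h - t) + ENNReal.ofReal (-(h - t))
    = ENNReal.ofReal |h - t| := by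
  rcases le_total 0 (h - t) with h1 | h1
  · rw [abs_of_nonneg h1, ENNReal.ofReal_of_nonpos (p := -(h - t)) (by linarith), add_zero]
  · rw [abs_of_nonpos h1, ENNReal.ofReal_of_nonpos (p := (h - t)) (by linarith), zero_add]

lemma aux_max (h t : ℝ) : |h - t| + |h + t| = 2 * max |h| |t| := by
  rcases le_total 0 h with h1 | h1 <;> rcases le_total 0 t with h2 | h2 <;>
  simp only [abs_of_nonneg, abs_of_nonpos, h1, h2] <;>
  rcases max_cases (|h|) (|t|) with ⟨h3, h4⟩ | ⟨h3, h4⟩ <;>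
  simp only [abs_of_nonneg, abs_of_nonpos, h1, h2] at h3 h4 <;> rw [h3] <;>
  rcases abs_cases (h - t) with ⟨h5, h6⟩ | ⟨h5, h6⟩ <;>
  rcases abs_cases (h + t) with ⟨h7, h8⟩ | ⟨h7, h8⟩ <;> rw [h5, h7] <;> linarith

/-- the reduced triple integrand -/
def JJ (d : ℕ) (K : Cyl d → ℝ) (g : Torus d → ℝ) (x y : Torus d) (t : ℝ) : ℝ≥0∞ :=
  ENNReal.ofReal (K (x - y, t)) * ENNReal.ofReal (g x - g y - t)

lemma PK_eq (d : ℕ) (K : Cyl d → ℝ) (hK : Measurable K) (g : Torus d → ℝ) (hg : Measurable g) :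
    PK d K (subgraph d g) = ∫⁻ x, ∫⁻ y, ∫⁻ t, JJ d K g x y t := by
  have hE : MeasurableSet (subgraph d g) := by
    unfold subgraph
    exact measurableSet_le (by fun_prop) (by fun_prop)
  let G : Torus d → ℝ → Torus d → ℝ → ℝ≥0∞ := fun x a y t =>
    ENNReal.ofReal (K (x - y, t)) * (Ioc (g y + t) (g x)).indicator 1 a
  have hG : Measurable (fun z : Torus d × ℝ × Torus d × ℝ => G z.1 z.2.1 z.2.2.1 z.2.2.2) := by
    refine Measurable.mul (by fun_prop) ?_
    have : MeasurableSet {z : Torus d × ℝ × Torus d × ℝ |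
        g z.2.2.1 + z.2.2.2 < z.2.1 ∧ z.2.1 ≤ g z.1} :=
      MeasurableSet.inter
        (measurableSet_lt (f := fun z : Torus d × ℝ × Torus d × ℝ => g z.2.2.1 + z.2.2.2)
          (g := fun z => z.2.1) (by fun_prop) (by fun_prop))
        (measurableSet_le (f := fun z : Torus d × ℝ × Torus d × ℝ => z.2.1)
          (g := fun z => g z.1) (by fun_prop) (by fun_prop))
    exact (measurable_const (a := (1 : ℝ≥0∞))).indicator this
  have h1 : PK d K (subgraph d g) = ∫⁻ x, ∫⁻ a, ∫⁻ y, ∫⁻ t, G x a y t := by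
    unfold PK
    have e1 : ∀ x : Cyl d, (subgraph d g).indicator
        (fun x => ∫⁻ y in (subgraph d g)ᶜ, ENNReal.ofReal (K (x - y))) x
        = ∫⁻ y, ∫⁻ t, G x.1 x.2 y t := by
      intro x
      have : ∀ y : Torus d, ∫⁻ b, (subgraph d g).indicator (fun x =>
          (subgraph d g)ᶜ.indicator (fun y => ENNReal.ofReal (K (x - y))) (y, b)) x
          = ∫⁻ t, G x.1 x.2 y t := by
        intro y
        rw [← lintegral_sub_left_eq_self _ x.2]
        refine lintegral_congr fun t => ?_
        simp only [G, indicator, subgraph, mem_ofPred_eq, mem_compl_iff, mem_Ioc, not_le,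
          Pi.one_apply]
        have e : x - (y, x.2 - t) = (x.1 - y, t) := by ext <;> simp
        simp only [e, lt_sub_iff_add_lt]
        by_cases h1 : x.2 ≤ g x.1 <;> by_cases h2 : g y + t < x.2 <;> simp [h1, h2]
      simp_rw [← this]
      have hm : Measurable (fun y : Cyl d => (subgraph d g).indicator (fun x =>
          (subgraph d g)ᶜ.indicator (fun y => ENNReal.ofReal (K (x - y))) y) x) := by
        by_cases h : x ∈ subgraph d g
        · simp only [h, indicator_of_mem]
          exact Measurable.indicator (by fun_prop) hE.compl
        · simp only [h, not_false_iff, indicator_of_notMem]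
          fun_prop
      rw [← lintegral_prod (f := fun y : Cyl d => (subgraph d g).indicator (fun x =>
          (subgraph d g)ᶜ.indicator (fun y => ENNReal.ofReal (K (x - y))) y) x) hm.aemeasurable]
      by_cases h : x ∈ subgraph d g
      · simp only [h, indicator_of_mem]
        rw [lintegral_indicator hE.compl]
        rfl
      · simp [h]
    rw [← lintegral_indicator hE]
    simp_rw [e1]
    have hm : Measurable (fun x : Cyl d => ∫⁻ y, ∫⁻ t, G x.1 x.2 y t) := by
      refine Measurable.lintegral_prod_right' (f := fun z : Cyl d × Torus d =>
        ∫⁻ t, G z.1.1 z.1.2 z.2 t) ?_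
      refine Measurable.lintegral_prod_right' (f := fun z : (Cyl d × Torus d) × ℝ =>
        G z.1.1.1 z.1.1.2 z.1.2 z.2) ?_
      exact hG.comp (f := fun z : (Cyl d × Torus d) × ℝ => (z.1.1.1, z.1.1.2, z.1.2, z.2))
        (by fun_prop)
    exact lintegral_prod _ hm.aemeasurable
  rw [h1]
  refine lintegral_congr fun x => ?_
  rw [lintegral_lintegral_swap]
  · refine lintegral_congr fun y => ?_
    rw [lintegral_lintegral_swap]
    · refine lintegral_congr fun t => ?_
      simp only [G, JJ]
      rw [lintegral_const_mul _ (measurable_one.indicator measurableSet_Ioc),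
        lintegral_indicator_one measurableSet_Ioc, Real.volume_Ioc, sub_sub]
    · exact (hG.comp (f := fun z : ℝ × ℝ => (x, z.1, y, z.2)) (by fun_prop)).aemeasurable
  · refine (Measurable.lintegral_prod_right' (f := fun z : (ℝ × Torus d) × ℝ =>
        G x z.1.1 z.1.2 z.2) ?_).aemeasurable
    exact hG.comp (f := fun z : (ℝ × Torus d) × ℝ => (x, z.1.1, z.1.2, z.2)) (by fun_prop)

lemma pack3 (d : ℕ) (f : Torus d → Torus d → ℝ → ℝ≥0∞)
    (hf : Measurable (fun z : (Torus d × Torus d) × ℝ => f z.1.1 z.1.2 z.2)) :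
    ∫⁻ x, ∫⁻ y, ∫⁻ t, f x y t = ∫⁻ z : (Torus d × Torus d) × ℝ, f z.1.1 z.1.2 z.2 := by
  have : (volume : Measure ((Torus d × Torus d) × ℝ)) = (volume.prod volume).prod volume := rfl
  rw [this, lintegral_prod _ hf.aemeasurable, lintegral_prod]
  exact (Measurable.lintegral_prod_right hf).aemeasurable

lemma four_PK (d : ℕ) (K : Cyl d → ℝ) (hK : Measurable K)
    (hsym1 : ∀ ξ : Cyl d, K (-ξ.1, ξ.2) = K ξ)
    (hsym2 : ∀ ξ : Cyl d, K (ξ.1, -ξ.2) = K ξ)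
    (g : Torus d → ℝ) (hg : Measurable g) :
    4 * PK d K (subgraph d g) = ∫⁻ z : (Torus d × Torus d) × ℝ,
      ENNReal.ofReal (K (z.1.1 - z.1.2, z.2)) *
        ENNReal.ofReal (2 * max |g z.1.1 - g z.1.2| |z.2|) := by
  have hP := PK_eq d K hK g hg
  have m1 : Measurable (fun z : (Torus d × Torus d) × ℝ => JJ d K g z.1.1 z.1.2 z.2) := by
    unfold JJ; fun_prop
  have m2 : Measurable (fun z : (Torus d × Torus d) × ℝ => JJ d K g z.1.2 z.1.1 z.2) := by
    unfold JJ; fun_prop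
  have m3 : Measurable (fun z : (Torus d × Torus d) × ℝ => JJ d K g z.1.1 z.1.2 (-z.2)) := by
    unfold JJ; fun_prop
  have m4 : Measurable (fun z : (Torus d × Torus d) × ℝ => JJ d K g z.1.2 z.1.1 (-z.2)) := by
    unfold JJ; fun_prop
  have h1 := hP
  rw [pack3 d (fun x y t => JJ d K g x y t) m1] at h1
  have hP2 : PK d K (subgraph d g) = ∫⁻ x, ∫⁻ y, ∫⁻ t, JJ d K g y x t := by
    rw [hP, lintegral_lintegral_swap]
    exact (Measurable.lintegral_prod_right m1).aemeasurable
  have h2 := hP2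
  rw [pack3 d (fun x y t => JJ d K g y x t) m2] at h2
  have h3 : PK d K (subgraph d g) = ∫⁻ x, ∫⁻ y, ∫⁻ t, JJ d K g x y (-t) := by
    rw [hP]
    refine lintegral_congr fun x => lintegral_congr fun y => ?_
    exact (lintegral_neg_eq_self (fun t => JJ d K g x y t) ).symm
  rw [pack3 d (fun x y t => JJ d K g x y (-t)) m3] at h3
  have h4 : PK d K (subgraph d g) = ∫⁻ x, ∫⁻ y, ∫⁻ t, JJ d K g y x (-t) := by
    rw [hP2]
    refine lintegral_congr fun x => lintegral_congr fun y => ?_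
    exact (lintegral_neg_eq_self (fun t => JJ d K g y x t) ).symm
  rw [pack3 d (fun x y t => JJ d K g y x (-t)) m4] at h4
  have : 4 * PK d K (subgraph d g) = (PK d K (subgraph d g) + PK d K (subgraph d g)) +
      (PK d K (subgraph d g) + PK d K (subgraph d g)) := by ring
  rw [this]
  nth_rewrite 1 [h1]
  nth_rewrite 1 [h4]
  nth_rewrite 1 [h3]
  nth_rewrite 1 [h2]
  rw [← lintegral_add_left m1, ← lintegral_add_left m3,
    ← lintegral_add_left (f := fun z : (Torus d × Torus d) × ℝ =>
      JJ d K g z.1.1 z.1.2 z.2 + JJ d K g z.1.2 z.1.1 (-z.2)) (m1.add m4)]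
  refine lintegral_congr fun z => ?_
  obtain ⟨⟨x, y⟩, t⟩ := z
  simp only [JJ]
  have k1 : K (y - x, t) = K (x - y, t) := by
    have := hsym1 (x - y, t); simpa using this
  rw [hsym2 (x - y, t), hsym2 (y - x, t), k1, ← mul_add, ← mul_add, ← mul_add]
  congr 1
  have e1 : g y - g x - -t = -((g x - g y) - t) := by ring
  have e2 : g y - g x - t = -((g x - g y) - -t) := by ring
  rw [e1, e2, aux_S, aux_S, ← ENNReal.ofReal_add (abs_nonneg _) (abs_nonneg _), ← aux_max,
    sub_neg_eq_add]

/-- Under the decay, symmetry and non-degeneracy assumptions on the kernel `K`, the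
nonlocal perimeter `𝒫_K` satisfies assumption (H). -/
theorem PK_assumptionH (d : ℕ) (hd : 2 ≤ d) (K : Cyl d → ℝ)
    (hKmeas : Measurable K) (hKnn : ∀ ξ, 0 ≤ K ξ)
    (p s γ : ℝ) (hp : 2 < p) (hs : s ∈ Set.Ioo (0:ℝ) 1) (hγ : 0 < γ)
    (hK1 : ∀ ξ : Cyl d, 1 ≤ |ξ.2| → K ξ ≤ γ / |ξ.2| ^ p)
    (hK2 : ∀ ξ : Cyl d, |ξ.2| < 1 →
      ENNReal.ofReal (K ξ) ≤
        ENNReal.ofReal γ / (ENNReal.ofReal (pnorm d ξ)) ^ ((d : ℝ) + s))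
    (hsym1 : ∀ ξ : Cyl d, K (-ξ.1, ξ.2) = K ξ)
    (hsym2 : ∀ ξ : Cyl d, K (ξ.1, -ξ.2) = K ξ)
    (γ₀ : ℝ) (hγ₀ : 0 < γ₀) (hKlow : ∀ ξ : Cyl d, |ξ.2| ≤ 1 → γ₀ ≤ K ξ)
    (L δ : ℝ) (hL : 0 < L) (hδ : 0 < δ) :
    ∃ ε₀ ∈ Set.Ioo (0:ℝ) 1, ∃ C : ℝ, 0 < C ∧
      ∀ g : Torus d → ℝ, LipschitzWith (Real.toNNReal L) g → δ ≤ osc d g →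
        ∀ ε : ℝ, 0 < ε → ε ≤ ε₀ →
          PK d K (subgraph d (fun x => (1 - ε) * g x)) + ENNReal.ofReal (C * ε)
            ≤ PK d K (subgraph d g) := by
  have hnn : ∀ r : ℝ, 0 < r → 0 < (volume (Metric.ball (0 : Torus d) r)).toReal := fun r hr =>
    ENNReal.toReal_pos (Metric.measure_ball_pos _ _ hr).ne' (measure_ne_top _ _)
  set r := δ / (4 * L) with hr
  have hr0 : 0 < r := by positivity
  set v := (volume (Metric.ball (0 : Torus d) r)).toReal with hv
  have hv0 : 0 < v := hnn r hr0
  set τ := min 1 (δ / 4) with hτ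
  have hτ0 : 0 < τ := by positivity
  refine ⟨1 / 2, by norm_num, γ₀ * δ * (v * v * (2 * τ)) / 4, by positivity, ?_⟩
  intro g hg hosc ε hε hε2
  have hgc : Continuous g := hg.continuous
  have hgm : Measurable g := hgc.measurable
  obtain ⟨x0, -, hx0⟩ := isCompact_univ.exists_isMaxOn (univ_nonempty (α := Torus d))
    hgc.continuousOn
  obtain ⟨y0, -, hy0⟩ := isCompact_univ.exists_isMinOn (univ_nonempty (α := Torus d))
    hgc.continuousOn
  have hxy : δ ≤ g x0 - g y0 := by
    have a1 : (⨆ x, g x) ≤ g x0 := ciSup_le fun x => hx0 (mem_univ x)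
    have a2 : g y0 ≤ ⨅ x, g x := le_ciInf fun x => hy0 (mem_univ x)
    unfold osc at hosc
    linarith
  have hlip : ∀ x y : Torus d, y ∈ Metric.ball x r → |g y - g x| ≤ δ / 4 := by
    intro x y hy
    have := hg.dist_le_mul y x
    rw [Real.dist_eq, Real.coe_toNNReal _ hL.le] at this
    have h2 : L * dist y x ≤ L * r := mul_le_mul_of_nonneg_left (Metric.mem_ball.1 hy).le hL.le
    have h3 : L * r = δ / 4 := by rw [hr]; field_simp
    linarith
  let A : Set ((Torus d × Torus d) × ℝ) := (Metric.ball x0 r ×ˢ Metric.ball y0 r) ×ˢ Icc (-τ) τ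
  have hA : MeasurableSet A :=
    (Metric.isOpen_ball.measurableSet.prod Metric.isOpen_ball.measurableSet).prod measurableSet_Icc
  have hb : ∀ x : Torus d, volume (Metric.ball x r) = ENNReal.ofReal v := by
    intro x
    rw [hv, ENNReal.ofReal_toReal (measure_ne_top _ _)]
    exact Measure.addHaar_ball_center volume x r
  have hAv : volume A = ENNReal.ofReal (v * v * (2 * τ)) := by
    have : (volume : Measure ((Torus d × Torus d) × ℝ)) = (volume.prod volume).prod volume := rfl
    rw [this, Measure.prod_prod, Measure.prod_prod, hb, hb, Real.volume_Icc,
      ← ENNReal.ofReal_mul hv0.le, ← ENNReal.ofReal_mul (by positivity)]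
    congr 1; ring
  have key : 4 * PK d K (subgraph d (fun x => (1 - ε) * g x)) +
      4 * ENNReal.ofReal (γ₀ * δ * (v * v * (2 * τ)) / 4 * ε) ≤ 4 * PK d K (subgraph d g) := by
    rw [four_PK d K hKmeas hsym1 hsym2 g hgm,
      four_PK d K hKmeas hsym1 hsym2 (fun x => (1 - ε) * g x) (by fun_prop)]
    have e : 4 * ENNReal.ofReal (γ₀ * δ * (v * v * (2 * τ)) / 4 * ε)
        = ∫⁻ z, A.indicator (fun _ => ENNReal.ofReal (γ₀ * (δ * ε))) z := by
      rw [lintegral_indicator_const hA, hAv, ← ENNReal.ofReal_mul (by positivity)]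
      rw [show (4 : ℝ≥0∞) = ENNReal.ofReal 4 by norm_num, ← ENNReal.ofReal_mul (by norm_num)]
      congr 1; ring
    rw [e, ← lintegral_add_right _ (measurable_const.indicator hA)]
    refine lintegral_mono fun z => ?_
    obtain ⟨⟨x, y⟩, t⟩ := z
    have hh : (1 - ε) * g x - (1 - ε) * g y = (1 - ε) * (g x - g y) := by ring
    simp only [hh, abs_mul, abs_of_nonneg (show 0 ≤ 1 - ε by linarith)]
    by_cases hz : ((x, y), t) ∈ A
    · rw [indicator_of_mem hz]
      obtain ⟨⟨hx, hy⟩, ht⟩ := hz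
      have b1 := abs_le.1 (hlip x0 x hx)
      have b2 := abs_le.1 (hlip y0 y hy)
      have ht' : |t| ≤ τ := abs_le.2 ht
      have hτ1 : τ ≤ 1 := min_le_left _ _
      have hτ2 : τ ≤ δ / 4 := min_le_right _ _
      have b3 : δ / 2 ≤ g x - g y := by linarith
      rw [abs_of_nonneg (show 0 ≤ g x - g y by linarith)]
      have hk := hKlow (x - y, t) (ht'.trans hτ1)
      have hk0 := hKnn (x - y, t)
      rw [max_eq_left (by nlinarith), max_eq_left (by nlinarith),
        ← ENNReal.ofReal_mul hk0, ← ENNReal.ofReal_mul hk0,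
        ← ENNReal.ofReal_add (mul_nonneg hk0 (by nlinarith)) (by positivity)]
      refine ENNReal.ofReal_le_ofReal ?_
      have c1 : γ₀ * (δ * ε) ≤ K (x - y, t) * (2 * ε * (g x - g y)) :=
        mul_le_mul hk (by nlinarith) (by positivity) hk0
      nlinarith
    · rw [indicator_of_notMem hz, add_zero]
      gcongr
      nlinarith [abs_nonneg (g x - g y)]
  rw [← mul_add] at key
  exact (ENNReal.mul_le_mul_iff_right (by norm_num) (by norm_num)).1 key
end
end

section
/- Let d ≥ 2 and 0 < α < d−1. The α-Riesz perimeter 𝒫^α satisfies assumption (H): for every L > 0 and δ > 0 there exist ε₀ ∈ (0,1) and C(δ,L) > 0 such that for every E ∈ 𝔠_L with osc_{𝕋^{d−1}} f_E ≥ δ one has 𝒫^α(E) − 𝒫^α(E_ε) ≥ C(δ,L) ε for all 0 < ε ≤ ε₀. -/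
open MeasureTheory Filter Set
open scoped ENNReal

noncomputable section

/-- The Riesz interaction `𝒥^α(E,F) = ∫_E ∫_F ‖x-y‖_♯^{-(d-α)} dy dx`. -/
def Jalpha (d : ℕ) (α : ℝ) (E F : Set (Cyl d)) : ℝ≥0∞ :=
  ∫⁻ x in E, ∫⁻ y in F, (ENNReal.ofReal (pnorm d (x - y))) ^ (-((d : ℝ) - α)) ∂volume ∂volume

/-- The slab `𝕊^d_{R₁,R₂} = 𝕋^{d-1} × (R₁, R₂)`. -/
def slab2 (d : ℕ) (R₁ R₂ : ℝ) : Set (Cyl d) := {x | R₁ < x.2 ∧ x.2 < R₂}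

/-- `𝒫^α_{R₁,R₂}(E) = 𝒥^α(𝕊,𝕊) - 𝒥^α(E∩𝕊, E∩𝕊)`. -/
def PalphaSlab (d : ℕ) (α R₁ R₂ : ℝ) (E : Set (Cyl d)) : ℝ≥0∞ :=
  Jalpha d α (slab2 d R₁ R₂) (slab2 d R₁ R₂)
    - Jalpha d α (E ∩ slab2 d R₁ R₂) (E ∩ slab2 d R₁ R₂)

/-- `ρ_E < +∞`, i.e. `E` is contained in some halfspace `𝕋^{d-1} × (-∞, ρ)`. -/
def BddTop (d : ℕ) (E : Set (Cyl d)) : Prop := ∃ ρ : ℝ, E ⊆ {x : Cyl d | x.2 < ρ}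

/-- `ρ_E = inf {ρ : E ⊆ 𝕋^{d-1} × (-∞, ρ)}`. -/
def rhoSup (d : ℕ) (E : Set (Cyl d)) : ℝ := sInf {ρ : ℝ | E ⊆ {x : Cyl d | x.2 < ρ}}

open Classical in
/-- The `α`-Riesz perimeter `𝒫^α` (the limits in `R` exist by monotonicity, so they
coincide with the `limsup`). -/
def Palpha (d : ℕ) (α : ℝ) (E : Set (Cyl d)) : ℝ≥0∞ :=
  if E = ∅ then 0
  else if BddTop d E then limsup (fun R : ℝ => PalphaSlab d α (-R) (rhoSup d E) E) atTop
  else limsup (fun R : ℝ => PalphaSlab d α (-R) R E) atTop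

lemma lint_abs_rpow (q T : ℝ) (hq : q < 1) :
    ∫⁻ t in Ioc (-T) T, (ENNReal.ofReal |t|) ^ (-q) < ⊤ := by
  have h0 : ∫⁻ t in Ioc 0 T, (ENNReal.ofReal |t|) ^ (-q) < ⊤ := by
    have h := (intervalIntegral.intervalIntegrable_rpow' (a := 0) (b := T) (r := -q)
      (by linarith)).1
    have h2 := h.lintegral_lt_top
    refine lt_of_eq_of_lt (setLIntegral_congr_fun measurableSet_Ioc ?_) h2
    intro t ht
    simp only
    rw [abs_of_pos ht.1, ENNReal.ofReal_rpow_of_pos ht.1]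
  have h1 : ∫⁻ t in Ico (-T) 0, (ENNReal.ofReal |t|) ^ (-q) < ⊤ := by
    have := (Measure.measurePreserving_neg (volume : Measure ℝ)).setLIntegral_comp_preimage_emb
      (MeasurableEquiv.neg ℝ).measurableEmbedding (fun t => (ENNReal.ofReal |t|) ^ (-q)) (Ioc 0 T)
    simp only [abs_neg] at this
    rw [← this] at h0
    convert h0 using 3
    ext x; simp
  have hsub : Ioc (-T) T ⊆ Ico (-T) 0 ∪ ({0} ∪ Ioc 0 T) := by
    intro x hx
    rcases lt_trichotomy x 0 with h | h | h
    · left; exact ⟨hx.1.le, h⟩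
    · right; left; exact h
    · right; right; exact ⟨h, hx.2⟩
  refine lt_of_le_of_lt (lintegral_mono_set hsub) ?_
  refine lt_of_le_of_lt (lintegral_union_le _ _ _) ?_
  refine ENNReal.add_lt_top.2 ⟨h1, lt_of_le_of_lt (lintegral_union_le _ _ _) ?_⟩
  refine ENNReal.add_lt_top.2 ⟨?_, h0⟩
  simp

lemma lint_circle (q : ℝ) (hq : q < 1) :
    ∫⁻ z : AddCircle (1:ℝ), (ENNReal.ofReal ‖z‖) ^ (-q) < ⊤ := by
  rw [← AddCircle.lintegral_preimage 1 (-(1/2))]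
  refine lt_of_eq_of_lt ?_ (lint_abs_rpow q (1/2) hq)
  rw [show -(1/2:ℝ) + 1 = 1/2 by norm_num]
  refine setLIntegral_congr_fun measurableSet_Ioc ?_
  intro t ht
  simp only
  rw [(AddCircle.norm_coe_eq_abs_iff (1:ℝ) one_ne_zero).2]
  rw [abs_one, abs_le]; exact ⟨ht.1.le, ht.2⟩

instance probCircle : IsProbabilityMeasure (volume : Measure (AddCircle (1:ℝ))) := ⟨by simp⟩

lemma lint_torus (d : ℕ) (q : ℝ) (hq : q < 1) :
    ∫⁻ z : Torus d, ∏ i, (ENNReal.ofReal ‖z i‖) ^ (-q) < ⊤ := by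
  have hm : Measurable (fun z : AddCircle (1:ℝ) => (ENNReal.ofReal ‖z‖) ^ (-q)) := by fun_prop
  have := ProbabilityTheory.lintegral_prod_eq_prod_lintegral_of_indepFun
    (μ := (volume : Measure (Torus d))) Finset.univ
    (fun i (z : Torus d) => (ENNReal.ofReal ‖z i‖) ^ (-q))
    (ProbabilityTheory.iIndepFun_pi (X := fun _ z => (ENNReal.ofReal ‖z‖) ^ (-q)) 
      (fun i => hm.aemeasurable)) (fun i => by fun_prop)
  rw [this]
  refine ENNReal.prod_lt_top (fun i _ => ?_)
  have h2 := (measurePreserving_eval (fun _ : Fin (d-1) => (volume : Measure (AddCircle (1:ℝ)))) i).lintegral_comp hm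
  exact lt_of_eq_of_lt h2 (lint_circle q hq)

/-- the kernel -/
def kern (d : ℕ) (α : ℝ) (z : Cyl d) : ℝ≥0∞ := (ENNReal.ofReal (pnorm d z)) ^ (-((d : ℝ) - α))

lemma pnorm_meas (d : ℕ) : Measurable (pnorm d) := by
  unfold pnorm; fun_prop

lemma kern_meas (d : ℕ) (α : ℝ) : Measurable (kern d α) := by
  unfold kern; exact (ENNReal.measurable_ofReal.comp (pnorm_meas d)).pow_const _

lemma ennrpow_anti {x y : ℝ≥0∞} {r : ℝ} (hr : r ≤ 0) (h : x ≤ y) : y ^ r ≤ x ^ r := by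
  rw [← neg_neg r, ENNReal.rpow_neg, ENNReal.rpow_neg x]
  exact ENNReal.inv_le_inv.2 (ENNReal.rpow_le_rpow h (by linarith))

lemma mp_sub (d : ℕ) (x : Cyl d) : MeasurePreserving (fun y : Cyl d => x - y) volume volume := by
  have h1 := volume_preserving_pi (fun i : Fin (d-1) =>
    Measure.measurePreserving_sub_left (volume : Measure (AddCircle (1:ℝ))) (x.1 i))
  exact h1.prod (Measure.measurePreserving_sub_left (volume : Measure ℝ) x.2)

lemma kern_le (d : ℕ) (hd : 2 ≤ d) (α : ℝ) (hα' : α < (d : ℝ) - 1) (z : Cyl d) :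
    kern d α z ≤ (∏ i, (ENNReal.ofReal ‖z.1 i‖) ^ (-(((d:ℝ) - α)/d)))
      * (ENNReal.ofReal |z.2|) ^ (-(((d:ℝ) - α)/d)) := by
  have hd0 : (0:ℝ) < d := by positivity
  have hq : -(((d:ℝ) - α)/d) ≤ 0 := by
    rw [neg_nonpos]; apply div_nonneg <;> linarith
  have hle1 : ∀ i, (ENNReal.ofReal (pnorm d z)) ^ (-(((d:ℝ) - α)/d)) ≤
      (ENNReal.ofReal ‖z.1 i‖) ^ (-(((d:ℝ) - α)/d)) := by
    intro i
    apply ennrpow_anti hq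
    apply ENNReal.ofReal_le_ofReal
    apply Real.le_sqrt_of_sq_le
    have := Finset.single_le_sum (f := fun i => ‖z.1 i‖^2) (fun i _ => sq_nonneg _)
      (Finset.mem_univ i)
    nlinarith [sq_nonneg z.2]
  have hle2 : (ENNReal.ofReal (pnorm d z)) ^ (-(((d:ℝ) - α)/d)) ≤
      (ENNReal.ofReal |z.2|) ^ (-(((d:ℝ) - α)/d)) := by
    apply ennrpow_anti hq
    apply ENNReal.ofReal_le_ofReal
    apply Real.le_sqrt_of_sq_le
    have := Finset.sum_nonneg (f := fun i => ‖z.1 i‖^2) (s := Finset.univ) (fun i _ => sq_nonneg _)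
    rw [sq_abs]; linarith
  have heq : kern d α z = (∏ i : Fin (d-1), (ENNReal.ofReal (pnorm d z)) ^ (-(((d:ℝ) - α)/d)))
      * (ENNReal.ofReal (pnorm d z)) ^ (-(((d:ℝ) - α)/d)) := by
    rw [Finset.prod_const, Finset.card_univ, Fintype.card_fin, ← pow_succ,
      Nat.sub_add_cancel (by omega), ← ENNReal.rpow_mul_natCast, kern]
    congr 1
    field_simp
  rw [heq]
  exact mul_le_mul' (Finset.prod_le_prod' fun i _ => hle1 i) hle2

lemma kern_fin (d : ℕ) (hd : 2 ≤ d) (α : ℝ) (hα : 0 < α) (hα' : α < (d : ℝ) - 1) (T : ℝ) :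
    ∫⁻ z in {z : Cyl d | z.2 ∈ Ioc (-T) T}, kern d α z < ⊤ := by
  have hd0 : (0:ℝ) < d := by positivity
  have hq : ((d:ℝ) - α)/d < 1 := by rw [div_lt_one hd0]; linarith
  have hs : {z : Cyl d | z.2 ∈ Ioc (-T) T} = univ ×ˢ Ioc (-T) T := by ext; simp
  refine lt_of_le_of_lt (lintegral_mono (kern_le d hd α hα')) ?_
  rw [hs, Measure.volume_eq_prod, ← Measure.prod_restrict, Measure.restrict_univ,
    lintegral_prod_mul (f := fun z : Torus d => ∏ i, (ENNReal.ofReal ‖z i‖) ^ (-(((d:ℝ) - α)/d)))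
      (g := fun t : ℝ => (ENNReal.ofReal |t|) ^ (-(((d:ℝ) - α)/d)))
      (Measurable.aemeasurable (Finset.measurable_fun_prod _ fun i _ => by fun_prop)) (by fun_prop)]
  exact ENNReal.mul_lt_top (lint_torus d _ hq) (lint_abs_rpow _ _ hq)

lemma J_fin (d : ℕ) (hd : 2 ≤ d) (α : ℝ) (hα : 0 < α) (hα' : α < (d : ℝ) - 1) (T : ℝ) :
    Jalpha d α (slab2 d 0 T) (slab2 d 0 T) < ⊤ := by
  have hms : MeasurableSet (slab2 d 0 T) :=
    (measurableSet_lt measurable_const measurable_snd).inter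
      (measurableSet_lt measurable_snd measurable_const)
  have hms2 : MeasurableSet {z : Cyl d | z.2 ∈ Ioc (-T) T} := measurable_snd measurableSet_Ioc
  have key : ∀ x ∈ slab2 d 0 T, ∫⁻ y in slab2 d 0 T, kern d α (x - y) ≤
      ∫⁻ z in {z : Cyl d | z.2 ∈ Ioc (-T) T}, kern d α z := by
    intro x hx
    rw [← lintegral_indicator hms, ← lintegral_indicator hms2,
      ← (mp_sub d x).lintegral_comp ((kern_meas d α).indicator hms2)]
    apply lintegral_mono
    intro y
    by_cases h1 : y ∈ slab2 d 0 T
    · have h2 : x - y ∈ {z : Cyl d | z.2 ∈ Ioc (-T) T} := by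
        obtain ⟨a1, a2⟩ := hx
        obtain ⟨b1, b2⟩ := h1
        constructor <;> simp <;> linarith
      simp only [indicator_of_mem h1, indicator_of_mem h2, le_refl]
    · simp only [indicator_of_notMem h1, zero_le]
  have hv : volume (slab2 d 0 T) < ⊤ := by
    have : slab2 d 0 T = univ ×ˢ Ioo 0 T := by ext; simp [slab2]
    rw [this, Measure.volume_eq_prod, Measure.prod_prod]; simp
  calc Jalpha d α (slab2 d 0 T) (slab2 d 0 T)
      ≤ ∫⁻ x in slab2 d 0 T, (∫⁻ z in {z : Cyl d | z.2 ∈ Ioc (-T) T}, kern d α z) :=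
        setLIntegral_mono measurable_const key
    _ < ⊤ := by
        rw [setLIntegral_const]
        exact ENNReal.mul_lt_top (kern_fin d hd α hα hα' T) hv

/-- reflection in the vertical variable -/
def flipM (d : ℕ) (M : ℝ) (x : Cyl d) : Cyl d := (x.1, M - x.2)

lemma flip_mp (d : ℕ) (M : ℝ) : MeasurePreserving (flipM d M) volume volume :=
  (MeasurePreserving.id (volume : Measure (Torus d))).prod
    (Measure.measurePreserving_sub_left (volume : Measure ℝ) M)

lemma flip_emb (d : ℕ) (M : ℝ) : MeasurableEmbedding (flipM d M) := by
  have h : Function.Involutive (flipM d M) := fun x => by simp [flipM]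
  exact (MeasurableEquiv.ofInvolutive _ h (flip_mp d M).measurable).measurableEmbedding

lemma pnorm_flip (d : ℕ) (M : ℝ) (x y : Cyl d) :
    pnorm d (flipM d M x - flipM d M y) = pnorm d (x - y) := by
  unfold pnorm flipM
  congr 1
  simp only [Prod.snd_sub, Prod.fst_sub]
  ring

lemma J_flip (d : ℕ) (α M : ℝ) (A B : Set (Cyl d)) :
    Jalpha d α (flipM d M ⁻¹' A) (flipM d M ⁻¹' B) = Jalpha d α A B := by
  unfold Jalpha
  rw [← (flip_mp d M).setLIntegral_comp_preimage_emb (flip_emb d M) _ A]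
  refine lintegral_congr fun x => ?_
  rw [← (flip_mp d M).setLIntegral_comp_preimage_emb (flip_emb d M) _ B]
  refine lintegral_congr fun y => ?_
  rw [pnorm_flip]

/-- the set above the graph of `u` in the slab `(0,T)` -/
def supT (d : ℕ) (u : Torus d → ℝ) (T : ℝ) : Set (Cyl d) :=
  {x | u x.1 ≤ x.2 ∧ 0 < x.2 ∧ x.2 < T}

/-- the truncated energy -/
def PsiT (d : ℕ) (α : ℝ) (u : Torus d → ℝ) (T : ℝ) : ℝ≥0∞ :=
  Jalpha d α (slab2 d 0 T) (slab2 d 0 T) - Jalpha d α (supT d u T) (supT d u T)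

lemma Palpha_eq (d : ℕ) (α : ℝ) (h : Torus d → ℝ) (x0 : Torus d) (hx0 : ∀ x, h x ≤ h x0) :
    Palpha d α (subgraph d h) = limsup (PsiT d α (fun x => h x0 - h x)) atTop := by
  have hne : subgraph d h ≠ ∅ := by
    apply Set.Nonempty.ne_empty
    exact ⟨(x0, h x0), le_refl (h x0)⟩
  have hset : {ρ : ℝ | subgraph d h ⊆ {x : Cyl d | x.2 < ρ}} = Ioi (h x0) := by
    ext ρ
    constructor
    · intro hρ
      have : ((x0, h x0) : Cyl d) ∈ subgraph d h := le_refl (h x0)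
      exact hρ this
    · intro hρ x hx
      have h1 : x.2 ≤ h x.1 := hx
      exact lt_of_le_of_lt (h1.trans (hx0 _)) hρ
  have hbdd : BddTop d (subgraph d h) := by
    have : h x0 + 1 ∈ Ioi (h x0) := by simp
    rw [← hset] at this
    exact ⟨_, this⟩
  have hrho : rhoSup d (subgraph d h) = h x0 := by
    unfold rhoSup; rw [hset, csInf_Ioi]
  unfold Palpha
  rw [if_neg hne, if_pos hbdd, hrho]
  have : (fun R : ℝ => PalphaSlab d α (-R) (h x0) (subgraph d h)) =
      (PsiT d α (fun x => h x0 - h x)) ∘ (fun R => R + h x0) := by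
    funext R
    simp only [Function.comp, PsiT, PalphaSlab]
    rw [← J_flip d α (h x0) (slab2 d 0 _), ← J_flip d α (h x0) (supT _ _ _)]
    have e1 : flipM d (h x0) ⁻¹' slab2 d 0 (R + h x0) = slab2 d (-R) (h x0) := by
      ext x; simp only [slab2, flipM, mem_preimage, mem_setOf_eq]
      constructor <;> rintro ⟨a, b⟩ <;> constructor <;> linarith
    have e2 : flipM d (h x0) ⁻¹' supT d (fun x => h x0 - h x) (R + h x0)
        = subgraph d h ∩ slab2 d (-R) (h x0) := by
      ext x; simp only [slab2, flipM, mem_preimage, mem_setOf_eq, supT, subgraph, mem_inter_iff]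
      constructor <;> rintro ⟨a, b, c⟩ <;> refine ⟨?_, ?_, ?_⟩ <;> linarith
    rw [e1, e2]
  rw [this, limsup, limsup, ← Filter.map_map]
  congr 2
  exact (OrderIso.addRight (h x0)).map_atTop

lemma supT_meas (d : ℕ) (u : Torus d → ℝ) (hu : Continuous u) (T : ℝ) :
    MeasurableSet (supT d u T) := by
  have h1 : MeasurableSet {x : Cyl d | u x.1 ≤ x.2} :=
    measurableSet_le (hu.measurable.comp measurable_fst) measurable_snd
  have h2 : MeasurableSet {x : Cyl d | 0 < x.2} := measurableSet_lt measurable_const measurable_snd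
  have h3 : MeasurableSet {x : Cyl d | x.2 < T} := measurableSet_lt measurable_snd measurable_const
  exact h1.inter (h2.inter h3)

lemma J_mono (d : ℕ) (α : ℝ) {A A' B B' : Set (Cyl d)} (h : A ⊆ A') (h' : B ⊆ B') :
    Jalpha d α A B ≤ Jalpha d α A' B' :=
  (lintegral_mono_set h).trans (lintegral_mono fun _ => lintegral_mono_set h')

lemma J_split (d : ℕ) (α : ℝ) {A B : Set (Cyl d)} (hA : MeasurableSet A) (hB : MeasurableSet B)
    (h : A ⊆ B) : Jalpha d α A A + Jalpha d α (B \ A) A ≤ Jalpha d α B B := by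
  calc Jalpha d α A A + Jalpha d α (B \ A) A
      ≤ Jalpha d α A B + Jalpha d α (B \ A) B :=
        add_le_add (J_mono d α le_rfl h) (J_mono d α le_rfl h)
    _ = Jalpha d α B B := by
        have := lintegral_union (μ := (volume : Measure (Cyl d))) (f := fun x => ∫⁻ y in B, (ENNReal.ofReal (pnorm d (x - y))) ^ (-((d : ℝ) - α)))
          (hB.diff hA) (disjoint_sdiff_right : Disjoint A (B \ A))
        rw [union_diff_cancel h] at this
        exact this.symm

/-- lower bound of the kernel -/
def kap (d : ℕ) (α L : ℝ) : ℝ≥0∞ :=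
  (ENNReal.ofReal (Real.sqrt ((L+1)^2 + (d-1 : ℕ)))) ^ (-((d : ℝ) - α))

lemma J_lower (d : ℕ) (α : ℝ) (hα' : α < (d : ℝ) - 1) (L : ℝ) (hL : 0 < L)
    (G A : Set (Cyl d)) (hG : ∀ x ∈ G, 0 < x.2 ∧ x.2 < L) (hGm : MeasurableSet G)
    (hA : slab2 d L (L+1) ⊆ A) :
    kap d α L * volume G ≤ Jalpha d α G A := by
  have hms : MeasurableSet (slab2 d L (L+1)) :=
    (measurableSet_lt measurable_const measurable_snd).inter
      (measurableSet_lt measurable_snd measurable_const)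
  have hv : volume (slab2 d L (L+1)) = 1 := by
    have : slab2 d L (L+1) = univ ×ˢ Ioo L (L+1) := by ext; simp [slab2]
    rw [this, Measure.volume_eq_prod, Measure.prod_prod]; simp
  refine le_trans ?_ (J_mono d α le_rfl hA)
  rw [← setLIntegral_const]
  unfold Jalpha
  refine setLIntegral_mono' hGm fun x hx => ?_
  calc kap d α L = ∫⁻ y in slab2 d L (L+1), kap d α L := by rw [setLIntegral_const, hv, mul_one]
    _ ≤ _ := by
      refine setLIntegral_mono' hms fun y hy => ?_
      refine ennrpow_anti (by linarith) (ENNReal.ofReal_le_ofReal (Real.sqrt_le_sqrt ?_))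
      obtain ⟨h1, h2⟩ := hG x hx
      obtain ⟨h3, h4⟩ := hy
      have hs : ∑ i, ‖(x - y).1 i‖ ^ 2 ≤ ((d-1 : ℕ) : ℝ) := by
        calc ∑ i, ‖(x - y).1 i‖ ^ 2 ≤ ∑ i : Fin (d-1), (1:ℝ) := by
              refine Finset.sum_le_sum fun i _ => ?_
              have := AddCircle.norm_le_half_period (1:ℝ) (x := (x-y).1 i) one_ne_zero
              rw [abs_one] at this
              nlinarith [norm_nonneg ((x-y).1 i)]
          _ = _ := by simp
      have : (x - y).2 ^ 2 ≤ (L+1)^2 := by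
        rw [Prod.snd_sub]; nlinarith
      linarith

lemma G_vol (d : ℕ) (u : Torus d → ℝ) (hu : Continuous u) (T δ ε L : ℝ) (hδ : 0 < δ)
    (hε : 0 < ε) (hε' : ε ≤ 1/2) (huL : ∀ x, u x ≤ L) (hT : L < T) (x1 : Torus d) (r : ℝ)
    (hb : ∀ x ∈ Metric.ball x1 r, δ / 2 ≤ u x) :
    volume (Metric.ball x1 r) * ENNReal.ofReal (ε * (δ / 2)) ≤
      volume (supT d (fun x => (1 - ε) * u x) T \ supT d u T) := by
  have hm := (supT_meas d (fun x => (1 - ε) * u x) (by fun_prop) T).diff (supT_meas d u hu T)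
  rw [Measure.volume_eq_prod, Measure.prod_apply hm, mul_comm, ← setLIntegral_const]
  refine le_trans ?_ (setLIntegral_le_lintegral (Metric.ball x1 r) _)
  refine setLIntegral_mono' measurableSet_ball fun x hx => ?_
  have h1 := hb x hx
  calc ENNReal.ofReal (ε * (δ / 2)) ≤ ENNReal.ofReal (u x - (1 - ε) * u x) :=
        ENNReal.ofReal_le_ofReal (by nlinarith)
    _ = volume (Ico ((1 - ε) * u x) (u x)) := (Real.volume_Ico).symm
    _ ≤ _ := by
      refine measure_mono fun t ht => ?_
      have h2 : 0 < (1 - ε) * u x := mul_pos (by linarith) (by linarith)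
      refine ⟨⟨ht.1, lt_of_lt_of_le h2 ht.1, ht.2.trans_le ((huL x).trans hT.le)⟩, ?_⟩
      rintro ⟨h3, -⟩
      exact absurd ht.2 (not_lt.2 h3)

lemma Psi_le (d : ℕ) (hd : 2 ≤ d) (α : ℝ) (hα : 0 < α) (hα' : α < (d : ℝ) - 1)
    (u : Torus d → ℝ) (hu : Continuous u) (T δ ε L : ℝ) (hδ : 0 < δ) (hL : 0 < L)
    (hε : 0 < ε) (hε' : ε ≤ 1/2) (hu0 : ∀ x, 0 ≤ u x)
    (huL : ∀ x, u x ≤ L) (hT : L + 1 ≤ T) (x1 : Torus d) (r : ℝ)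
    (hb : ∀ x ∈ Metric.ball x1 r, δ / 2 ≤ u x) :
    PsiT d α (fun x => (1 - ε) * u x) T +
      kap d α L * (volume (Metric.ball x1 r) * ENNReal.ofReal (ε * (δ / 2))) ≤ PsiT d α u T := by
  have hA := supT_meas d u hu T
  have hB := supT_meas d (fun x => (1 - ε) * u x) (by fun_prop) T
  have hAB : supT d u T ⊆ supT d (fun x => (1 - ε) * u x) T := by
    rintro x ⟨a, b⟩
    refine ⟨le_trans ?_ a, b⟩
    nlinarith [hu0 x.1]
  have hBH : supT d (fun x => (1 - ε) * u x) T ⊆ slab2 d 0 T := fun x hx => hx.2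
  have hG := G_vol d u hu T δ ε L hδ hε hε' huL (by linarith) x1 r hb
  have hJ := J_lower d α hα' L hL (supT d (fun x => (1 - ε) * u x) T \ supT d u T) (supT d u T)
    (by
      rintro x ⟨⟨h1, h2, h3⟩, h4⟩
      refine ⟨h2, ?_⟩
      by_contra hc
      exact h4 ⟨(huL _).trans (not_lt.1 hc), h2, h3⟩) (hB.diff hA)
    (by
      rintro x ⟨h1, h2⟩
      exact ⟨(huL _).trans h1.le, hL.trans h1, by linarith⟩)
  have hs := J_split d α hA hB hAB
  have hH := J_mono d α hBH hBH
  have hfin := J_fin d hd α hα hα' T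
  unfold PsiT
  set c := kap d α L * (volume (Metric.ball x1 r) * ENNReal.ofReal (ε * (δ / 2)))
  have hc : Jalpha d α (supT d u T) (supT d u T) + c ≤
      Jalpha d α (supT d (fun x => (1 - ε) * u x) T) (supT d (fun x => (1 - ε) * u x) T) :=
    le_trans (add_le_add le_rfl (le_trans (mul_le_mul' le_rfl hG) hJ)) hs
  have hAf := ne_top_of_le_ne_top hfin.ne (le_trans (le_trans le_self_add hc) hH)
  apply ENNReal.le_sub_of_add_le_right hAf
  rw [add_assoc, add_comm c]
  calc _ ≤ _ := add_le_add_right hc _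
    _ = _ := tsub_add_cancel_of_le hH

lemma ball_vol (d : ℕ) (x : Torus d) (r : ℝ) :
    volume (Metric.ball x r) = volume (Metric.ball (0 : Torus d) r) :=
  Measure.addHaar_ball_center _ _ _

/-- The `α`-Riesz perimeter satisfies assumption (H). -/
theorem Palpha_assumptionH (d : ℕ) (hd : 2 ≤ d) (α : ℝ) (hα : 0 < α)
    (hα' : α < (d : ℝ) - 1) (L δ : ℝ) (hL : 0 < L) (hδ : 0 < δ) :
    ∃ ε₀ ∈ Set.Ioo (0:ℝ) 1, ∃ C : ℝ, 0 < C ∧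
      ∀ g : Torus d → ℝ, LipschitzWith (Real.toNNReal L) g → δ ≤ osc d g →
        ∀ ε : ℝ, 0 < ε → ε ≤ ε₀ →
          Palpha d α (subgraph d (fun x => (1 - ε) * g x)) + ENNReal.ofReal (C * ε)
            ≤ Palpha d α (subgraph d g) := by
  have : Nonempty (Torus d) := ⟨0⟩
  set r := δ / (2 * L) with hr
  have hrpos : 0 < r := by positivity
  set m := kap d α L * volume (Metric.ball (0 : Torus d) r) with hm
  have hk0 : kap d α L ≠ 0 := by
    unfold kap
    simp only [ne_eq, ENNReal.rpow_eq_zero_iff, not_or, not_and, not_lt]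
    refine ⟨fun _ => by linarith, fun h => absurd h ENNReal.ofReal_ne_top⟩
  have hkt : kap d α L ≠ ⊤ := by
    unfold kap
    refine ENNReal.rpow_ne_top_of_ne_zero ?_ ENNReal.ofReal_ne_top
    rw [ne_eq, ENNReal.ofReal_eq_zero, not_le]
    positivity
  have hb0 : volume (Metric.ball (0 : Torus d) r) ≠ 0 := (Metric.measure_ball_pos _ _ hrpos).ne'
  have hbt : volume (Metric.ball (0 : Torus d) r) ≠ ⊤ := measure_ne_top _ _
  have hm0 : m ≠ 0 := mul_ne_zero hk0 hb0
  have hmt : m ≠ ⊤ := ENNReal.mul_ne_top hkt hbt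
  have hmpos : 0 < m.toReal := ENNReal.toReal_pos hm0 hmt
  refine ⟨1/2, ⟨by norm_num, by norm_num⟩, m.toReal * (δ / 2), by positivity, ?_⟩
  intro g hg hosc ε hε hε'
  have hgc := hg.continuous
  obtain ⟨x0, -, hx0⟩ := isCompact_univ.exists_isMaxOn (univ_nonempty (α := Torus d))
    hgc.continuousOn
  obtain ⟨x1, -, hx1⟩ := isCompact_univ.exists_isMinOn (univ_nonempty (α := Torus d))
    hgc.continuousOn
  have hx0 : ∀ x, g x ≤ g x0 := fun x => hx0 (mem_univ x)
  have hx1 : ∀ x, g x1 ≤ g x := fun x => hx1 (mem_univ x)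
  have hosc' : δ ≤ g x0 - g x1 := by
    have h1 : (⨆ x, g x) ≤ g x0 := ciSup_le hx0
    have h2 : g x1 ≤ ⨅ x, g x := le_ciInf hx1
    unfold osc at hosc
    linarith
  have hlip : ∀ x y, g x - g y ≤ L * dist x y := by
    intro x y
    have := hg.dist_le_mul x y
    rw [Real.coe_toNNReal _ hL.le, Real.dist_eq] at this
    exact (le_abs_self _).trans this
  have hdist : ∀ x y : Torus d, dist x y ≤ 1 := by
    intro x y
    rw [dist_pi_le_iff zero_le_one]
    intro i
    rw [dist_eq_norm]
    have := AddCircle.norm_le_half_period (1:ℝ) (x := x i - y i) one_ne_zero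
    rw [abs_one] at this
    linarith
  rw [Palpha_eq d α g x0 hx0, Palpha_eq d α (fun x => (1 - ε) * g x) x0
    (fun x => mul_le_mul_of_nonneg_left (hx0 x) (by linarith))]
  have hu : (fun x => (1 - ε) * g x0 - (1 - ε) * g x) = fun x => (1 - ε) * (g x0 - g x) := by
    funext x; ring
  rw [hu, ← limsup_add_const _ _ _ (by isBoundedDefault) (by isBoundedDefault)]
  refine limsup_le_limsup ?_ (by isBoundedDefault) (by isBoundedDefault)
  · filter_upwards [eventually_ge_atTop (L + 1)] with T hT
    have key := Psi_le d hd α hα hα' (fun x => g x0 - g x) (by fun_prop) T δ ε L hδ hL hε hε'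
      (fun x => by linarith [hx0 x])
      (fun x => by nlinarith [hlip x0 x, hdist x0 x]) hT x1 r
      (fun x hx => by
        rw [Metric.mem_ball] at hx
        have h1 := hlip x x1
        have h2 : L * dist x x1 ≤ L * r := by gcongr
        have h3 : L * r = δ / 2 := by rw [hr]; field_simp
        linarith)
    refine le_trans (le_of_eq ?_) key
    rw [ball_vol, ← mul_assoc, ← hm]
    congr 1
    rw [show m.toReal * (δ / 2) * ε = m.toReal * (ε * (δ / 2)) by ring,
      ENNReal.ofReal_mul ENNReal.toReal_nonneg, ENNReal.ofReal_toReal hmt]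
end
end
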